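/- Assume a−b is odd and N_m ≠ 0, and let k = max{ j ∈ ℤ : N_{m−j} ≠ 0 } (so k ≥ 0). Then for a general linear form L ∈ R_1, setting S = R/(L) ≅ K[x,y] and letting φ̄ : ⊕_{i=1}^{n+2} S(−a_i) → ⊕_{j=1}^{n} S(−b_j) be the map induced by φ, the kernel of φ̄ is a free graded S-module isomorphic to S(−(m−k)) ⊕ S(−(m+k+1)) (this expresses that the restriction of the associated bundle to a general line splits as O(−k−1) ⊕ O(k) after normalization). -/

import Mathlib

open MvPolynomial

noncomputable section

variable {K : Type*} [Field K]

/-- `p` is homogeneous of (integer) degree `d`; for `d < 0` this forces `p = 0`. -/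
def homog (p : MvPolynomial (Fin 3) K) (d : ℤ) : Prop :=
  IsWeightedHomogeneous (fun _ : Fin 3 => (1 : ℤ)) p d

/-- The degree-`d` graded piece of `⊕_{i=1}^{N} R(-a i)`, as a `K`-subspace of
`Fin N → R`, `R = K[x,y,z]`. -/
def degPiece (N : ℕ) (a : Fin N → ℤ) (d : ℤ) :
    Submodule K (Fin N → MvPolynomial (Fin 3) K) :=
  Submodule.pi Set.univ fun i =>
    weightedHomogeneousSubmodule K (fun _ : Fin 3 => (1 : ℤ)) (d - a i)

lemma mem_degPiece {N : ℕ} {a : Fin N → ℤ} {d : ℤ} {v : Fin N → MvPolynomial (Fin 3) K} :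
    v ∈ degPiece (K := K) N a d ↔ ∀ i, homog (v i) (d - a i) := by
  simp [degPiece, Submodule.mem_pi, mem_weightedHomogeneousSubmodule, homog]

/-- The map `φ : ⊕ R(-a i) → ⊕ R(-b j)` given by the matrix `Φ`, as a `K`-linear map. -/
def phiK (n : ℕ) (Φ : Matrix (Fin n) (Fin (n + 2)) (MvPolynomial (Fin 3) K)) :
    (Fin (n + 2) → MvPolynomial (Fin 3) K) →ₗ[K] (Fin n → MvPolynomial (Fin 3) K) :=
  (Matrix.mulVecLin Φ).restrictScalars K

/-- The degree-`d` graded piece of `N = ker φ`. -/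
def Nd (n : ℕ) (a : Fin (n + 2) → ℤ) (Φ : Matrix (Fin n) (Fin (n + 2)) (MvPolynomial (Fin 3) K))
    (d : ℤ) : Submodule K (Fin (n + 2) → MvPolynomial (Fin 3) K) :=
  degPiece (n + 2) a d ⊓ LinearMap.ker (phiK n Φ)

/-- The image of the degree-`d` piece of `F` inside the degree-`d` piece of `G`,
viewed as a subspace of the latter. -/
def MdSub (n : ℕ) (a : Fin (n + 2) → ℤ) (b : Fin n → ℤ)
    (Φ : Matrix (Fin n) (Fin (n + 2)) (MvPolynomial (Fin 3) K)) (d : ℤ) :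
    Submodule K ↥(degPiece (K := K) n b d) :=
  Submodule.comap (degPiece (K := K) n b d).subtype
    (Submodule.map (phiK n Φ) (degPiece (n + 2) a d))

/-- The degree-`d` graded piece of `M = coker φ`. -/
abbrev Md (n : ℕ) (a : Fin (n + 2) → ℤ) (b : Fin n → ℤ)
    (Φ : Matrix (Fin n) (Fin (n + 2)) (MvPolynomial (Fin 3) K)) (d : ℤ) :=
  ↥(degPiece (K := K) n b d) ⧸ MdSub n a b Φ d

/-- Multiplication by `L` on tuples of polynomials, as a `K`-linear map. -/
def mulL (N : ℕ) (L : MvPolynomial (Fin 3) K) :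
    (Fin N → MvPolynomial (Fin 3) K) →ₗ[K] (Fin N → MvPolynomial (Fin 3) K) :=
  ((LinearMap.lsmul (MvPolynomial (Fin 3) K) (Fin N → MvPolynomial (Fin 3) K)) L).restrictScalars K

lemma mulL_apply {N : ℕ} (L : MvPolynomial (Fin 3) K) (v : Fin N → MvPolynomial (Fin 3) K) :
    mulL N L v = L • v := rfl

lemma mulL_mem {N : ℕ} {a : Fin N → ℤ} {L : MvPolynomial (Fin 3) K} (hL : homog L 1)
    {d : ℤ} {v : Fin N → MvPolynomial (Fin 3) K} (hv : v ∈ degPiece (K := K) N a (d - 1)) :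
    mulL N L v ∈ degPiece (K := K) N a d := by
  rw [mem_degPiece] at hv ⊢
  intro i
  have h := hL.mul (hv i)
  have e : (1 : ℤ) + (d - 1 - a i) = d - a i := by ring
  rw [e] at h
  simpa [mulL_apply, smul_eq_mul, homog] using h

/-- Multiplication by `L` from the degree-`d-1` piece of `G` to the degree-`d` piece. -/
def mulLres (n : ℕ) (b : Fin n → ℤ) (L : MvPolynomial (Fin 3) K) (hL : homog L 1) (d : ℤ) :
    ↥(degPiece (K := K) n b (d - 1)) →ₗ[K] ↥(degPiece (K := K) n b d) :=
  (mulL n L).restrict fun _ hv => mulL_mem hL hv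

lemma mulLres_comap (n : ℕ) (a : Fin (n + 2) → ℤ) (b : Fin n → ℤ)
    (Φ : Matrix (Fin n) (Fin (n + 2)) (MvPolynomial (Fin 3) K))
    (L : MvPolynomial (Fin 3) K) (hL : homog L 1) (d : ℤ) :
    MdSub n a b Φ (d - 1) ≤ Submodule.comap (mulLres n b L hL d) (MdSub n a b Φ d) := by
  rintro ⟨w, hw⟩ hmem
  obtain ⟨v, hv, hφv⟩ := hmem
  refine ⟨mulL (n + 2) L v, mulL_mem hL hv, ?_⟩
  show phiK n Φ (mulL (n + 2) L v) = ((mulLres n b L hL d) ⟨w, hw⟩ : Fin n → MvPolynomial (Fin 3) K)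
  have : phiK n Φ (mulL (n + 2) L v) = L • phiK n Φ v := by
    simp [phiK, mulL_apply]
  rw [this, hφv]
  rfl

/-- The map induced by multiplication by `L` from `M_{d-1}` to `M_d`,
where `M = coker φ`. -/
def mulLmap (n : ℕ) (a : Fin (n + 2) → ℤ) (b : Fin n → ℤ)
    (Φ : Matrix (Fin n) (Fin (n + 2)) (MvPolynomial (Fin 3) K))
    (L : MvPolynomial (Fin 3) K) (hL : homog L 1) (d : ℤ) :
    Md n a b Φ (d - 1) →ₗ[K] Md n a b Φ d :=
  Submodule.mapQ (MdSub n a b Φ (d - 1)) (MdSub n a b Φ d) (mulLres n b L hL d)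
    (mulLres_comap n a b Φ L hL d)

/-- The linear form with coefficient vector `c`. -/
def linform (c : Fin 3 → K) : MvPolynomial (Fin 3) K := ∑ i, C (c i) * X i

lemma homog_linform (c : Fin 3 → K) : homog (linform c) 1 := by
  rw [homog, ← mem_weightedHomogeneousSubmodule]
  refine sum_mem fun i _ => ?_
  rw [mem_weightedHomogeneousSubmodule]
  simpa using (isWeightedHomogeneous_C (fun _ : Fin 3 => (1 : ℤ)) (c i)).mul
    (isWeightedHomogeneous_X K (fun _ : Fin 3 => (1 : ℤ)) i)

/-- Finite length of `coker φ`: all sufficiently high graded pieces vanish. -/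
def FiniteColength (n : ℕ) (a : Fin (n + 2) → ℤ) (b : Fin n → ℤ)
    (Φ : Matrix (Fin n) (Fin (n + 2)) (MvPolynomial (Fin 3) K)) : Prop :=
  ∃ D : ℤ, ∀ d : ℤ, D ≤ d →
    degPiece (K := K) n b d ≤ Submodule.map (phiK n Φ) (degPiece (n + 2) a d)

end


/-! ### Part 1: Pluecker coordinates -/

section Pl
set_option linter.unusedSectionVars false
variable {T : Type*} [CommRing T] {n : ℕ}

/-- square matrix with rows `Φ`, `α`, `β`. -/
def bigM (Φ : Matrix (Fin n) (Fin n ⊕ Fin 2) T) (α β : Fin n ⊕ Fin 2 → T) :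
    Matrix (Fin n ⊕ Fin 2) (Fin n ⊕ Fin 2) T :=
  Matrix.fromRows Φ (Matrix.of ![α, β])

lemma bigM_update0 (Φ : Matrix (Fin n) (Fin n ⊕ Fin 2) T) (α β γ : Fin n ⊕ Fin 2 → T) :
    (bigM Φ α β).updateRow (Sum.inr 0) γ = bigM Φ γ β := by
  ext i j
  rcases i with i | i
  · simp [bigM, Matrix.updateRow_apply]
  · fin_cases i <;> simp [bigM, Matrix.updateRow_apply]

lemma bigM_update1 (Φ : Matrix (Fin n) (Fin n ⊕ Fin 2) T) (α β γ : Fin n ⊕ Fin 2 → T) :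
    (bigM Φ α β).updateRow (Sum.inr 1) γ = bigM Φ α γ := by
  ext i j
  rcases i with i | i
  · simp [bigM, Matrix.updateRow_apply]
  · fin_cases i <;> simp [bigM, Matrix.updateRow_apply]

lemma bigM_cramer (Φ : Matrix (Fin n) (Fin n ⊕ Fin 2) T) (α β γ : Fin n ⊕ Fin 2 → T)
    (s : Fin n ⊕ Fin 2 → T) (hs : Φ.mulVec s = 0) :
    (γ ⬝ᵥ s) * (bigM Φ α β).det =
      (α ⬝ᵥ s) * (bigM Φ γ β).det + (β ⬝ᵥ s) * (bigM Φ α γ).det := by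
  set B := bigM Φ α β with hB
  have h1 : (B.adjugate).mulVec (B.mulVec s) = B.det • s := by
    rw [Matrix.mulVec_mulVec, Matrix.adjugate_mul, Matrix.smul_mulVec, Matrix.one_mulVec]
  have h2 : γ ⬝ᵥ (B.det • s) = (Matrix.vecMul γ B.adjugate) ⬝ᵥ (B.mulVec s) := by
    rw [← h1, Matrix.dotProduct_mulVec]
  have h3 : ∀ r, Matrix.vecMul γ B.adjugate r = (B.updateRow r γ).det := by
    intro r
    rw [← Matrix.cramer_transpose_apply, Matrix.cramer_eq_adjugate_mulVec,
      ← Matrix.adjugate_transpose, Matrix.mulVec_transpose]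
  have h4 : ∀ r, B.mulVec s (Sum.inl r) = 0 := by
    intro r
    have := congrFun hs r
    simpa [hB, bigM, Matrix.fromRows_mulVec] using this
  rw [dotProduct_smul, smul_eq_mul] at h2
  rw [mul_comm, h2, dotProduct, Fintype.sum_sum_type]
  simp only [h4, mul_zero, Finset.sum_const_zero, zero_add, Fin.sum_univ_two, h3]
  rw [hB, bigM_update0, bigM_update1]
  simp [bigM, Matrix.mulVec]
  ring

/-- Pluecker coordinates. -/
def om (Φ : Matrix (Fin n) (Fin n ⊕ Fin 2) T) (i j : Fin n ⊕ Fin 2) : T :=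
  (bigM Φ (Pi.single i 1) (Pi.single j 1)).det

lemma om_swap (Φ : Matrix (Fin n) (Fin n ⊕ Fin 2) T) (i j : Fin n ⊕ Fin 2) :
    om Φ j i = - om Φ i j := by
  have h := Matrix.det_permute (Equiv.swap (Sum.inr 0) (Sum.inr 1))
    (bigM Φ (Pi.single i 1) (Pi.single j 1))
  rw [Equiv.Perm.sign_swap (by simp)] at h
  have e : (bigM Φ (Pi.single i 1) (Pi.single j 1)).submatrix
      (Equiv.swap (Sum.inr 0) (Sum.inr 1)) id = bigM Φ (Pi.single j 1) (Pi.single i 1) := by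
    ext r c
    rcases r with r | r
    · simp [bigM, Equiv.swap_apply_of_ne_of_ne]
    · fin_cases r <;> simp [bigM]
  rw [e] at h
  simpa [om] using h

lemma om_rel (Φ : Matrix (Fin n) (Fin n ⊕ Fin 2) T)
    (s : Fin n ⊕ Fin 2 → T) (hs : Φ.mulVec s = 0) (i j k : Fin n ⊕ Fin 2) :
    s i * om Φ j k = s j * om Φ i k + s k * om Φ j i := by
  have := bigM_cramer Φ (Pi.single j 1) (Pi.single k 1) (Pi.single i 1) s hs
  simpa [om] using this

lemma om_ker (Φ : Matrix (Fin n) (Fin n ⊕ Fin 2) T) (i : Fin n ⊕ Fin 2) :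
    Φ.mulVec (om Φ i) = 0 := by
  ext r
  let B := bigM Φ (Pi.single i 1) 0
  let f : (Fin n ⊕ Fin 2 → T) →ₗ[T] T :=
    (Matrix.detRowAlternating (R := T) (n := Fin n ⊕ Fin 2)).toMultilinearMap.toLinearMap B (Sum.inr 1)
  have hf : ∀ β, f β = (bigM Φ (Pi.single i 1) β).det := by
    intro β
    rw [← bigM_update1 Φ (Pi.single i 1) 0 β]
    rfl
  have h := LinearMap.pi_apply_eq_sum_univ f (Φ r)
  rw [hf] at h
  have h0 : (bigM Φ (Pi.single i 1) (Φ r)).det = 0 := by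
    apply Matrix.det_zero_of_row_eq (i := Sum.inl r) (j := Sum.inr 1) (by simp)
    ext c
    simp [bigM]
  rw [h0] at h
  simp only [Matrix.mulVec, dotProduct, Pi.zero_apply]
  rw [h]
  refine Finset.sum_congr rfl fun c _ => ?_
  rw [hf, smul_eq_mul, om]
  congr 4
  ext x
  simp [Pi.single_apply, eq_comm]

lemma om_block (Φ : Matrix (Fin n) (Fin n ⊕ Fin 2) T) (A : Matrix (Fin n ⊕ Fin 2) (Fin n) T) (t : T)
    (hA : Φ * A = t • (1 : Matrix (Fin n) (Fin n) T))
    (s w : Fin n ⊕ Fin 2 → T) (hs : Φ.mulVec s = 0) (hw : Φ.mulVec w = 0) :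
    ∃ r, ∀ i j, t ^ n * (s i * w j - s j * w i) = r * om Φ i j := by
  let Q : Matrix (Fin n ⊕ Fin 2) (Fin 2) T := (Matrix.of ![s, w]).transpose
  refine ⟨(Matrix.fromCols A Q).det, fun i j => ?_⟩
  have hQ : Φ * Q = 0 := by
    ext r c
    fin_cases c
    · exact congrFun hs r
    · exact congrFun hw r
  rw [om, mul_comm (Matrix.det _), ← Matrix.det_mul, bigM, Matrix.fromRows_mul_fromCols, hQ,
    Matrix.det_fromBlocks_zero₁₂, hA, Matrix.det_fin_two]
  have h0 : ∀ (x y : Fin n ⊕ Fin 2 → T) (a b : Fin 2),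
      (Matrix.of ![x, y] * Q) a b = ![x, y] a ⬝ᵥ ![s, w] b := fun _ _ _ _ => rfl
  simp only [h0]
  simp
  ring

lemma om_map {F : Type*} [CommRing F] (g : T →+* F) (Φ : Matrix (Fin n) (Fin n ⊕ Fin 2) T)
    (i j : Fin n ⊕ Fin 2) : om (Φ.map g) i j = g (om Φ i j) := by
  rw [om, om, RingHom.map_det]
  congr 1
  ext a b
  rcases a with a | a
  · simp [bigM]
  · fin_cases a <;> simp [bigM, Pi.single_apply, apply_ite g]

lemma om_ne_field {F : Type*} [Field F] (Φ : Matrix (Fin n) (Fin n ⊕ Fin 2) F)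
    (A : Matrix (Fin n ⊕ Fin 2) (Fin n) F) (t : F) (ht : t ≠ 0)
    (hA : Φ * A = t • (1 : Matrix (Fin n) (Fin n) F)) : ∃ i j, om Φ i j ≠ 0 := by
  by_contra! hcon
  have h1 := LinearMap.finrank_range_add_finrank_ker (Matrix.mulVecLin Φ)
  have h2 : Module.finrank F (LinearMap.range (Matrix.mulVecLin Φ)) ≤ n := by
    simpa using Submodule.finrank_le (LinearMap.range (Matrix.mulVecLin Φ))
  simp only [Module.finrank_fintype_fun_eq_card, Fintype.card_sum, Fintype.card_fin] at h1
  have h3 : 1 < Module.finrank F (LinearMap.ker (Matrix.mulVecLin Φ)) := by omega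
  have : Nontrivial (LinearMap.ker (Matrix.mulVecLin Φ)) :=
    Module.nontrivial_of_finrank_pos (R := F) (by omega)
  obtain ⟨s, hs0⟩ := exists_ne (0 : LinearMap.ker (Matrix.mulVecLin Φ))
  obtain ⟨w, hw⟩ := exists_linearIndependent_pair_of_one_lt_finrank h3 hs0
  obtain ⟨r, hr⟩ := om_block Φ A t hA s.1 w.1 (LinearMap.mem_ker.mp s.2) (LinearMap.mem_ker.mp w.2)
  simp only [hcon, mul_zero, mul_eq_zero, pow_eq_zero_iff', ht, false_and, false_or] at hr
  have hs1 : s.1 ≠ 0 := fun h => hs0 (Subtype.ext h)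
  obtain ⟨i, hi⟩ := Function.ne_iff.mp hs1
  rw [LinearIndependent.pair_iff] at hw
  have := hw (w.1 i) (-(s.1 i)) (by
    ext j
    have := hr i j
    simp
    linear_combination -this)
  exact hi (by simpa using this.2)

lemma om_ne [IsDomain T] (Φ : Matrix (Fin n) (Fin n ⊕ Fin 2) T)
    (A : Matrix (Fin n ⊕ Fin 2) (Fin n) T) (t : T) (ht : t ≠ 0)
    (hA : Φ * A = t • (1 : Matrix (Fin n) (Fin n) T)) : ∃ i j, om Φ i j ≠ 0 := by
  let g := algebraMap T (FractionRing T)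
  have hg : Function.Injective g := IsFractionRing.injective T (FractionRing T)
  obtain ⟨i, j, h⟩ := om_ne_field (Φ.map g) (A.map g) (g t) (by simpa [map_eq_zero_iff g hg] using ht)
    (by
      rw [← Matrix.map_mul, hA]
      ext a b
      simp [Matrix.one_apply, apply_ite g])
  refine ⟨i, j, fun h0 => h ?_⟩
  rw [om_map, h0, map_zero]

end Pl

/-! ### Part 2: graded lemmas -/

section Gr
variable {K : Type*} [Field K] {σ : Type*}

/-- homogeneity in any number of variables -/
abbrev hg (p : MvPolynomial σ K) (d : ℤ) : Prop :=
  IsWeightedHomogeneous (fun _ : σ => (1 : ℤ)) p d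

/-- homogeneous component -/
noncomputable abbrev hcomp (d : ℤ) : MvPolynomial σ K →ₗ[K] MvPolynomial σ K :=
  weightedHomogeneousComponent (fun _ : σ => (1 : ℤ)) d

lemma hcomp_mul {f : MvPolynomial σ K} {d : ℤ} (hf : hg f d) (e : ℤ) (g : MvPolynomial σ K) :
    hcomp (d + e) (f * g) = f * hcomp e g := by
  let _ := weightedGradedAlgebra K (fun _ : σ => (1 : ℤ))
  have h := DirectSum.coe_decompose_mul_add_of_left_mem
    (weightedHomogeneousSubmodule K (fun _ : σ => (1 : ℤ))) (a := f) (b := g) (i := d) (j := e) hf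
  have h2 := fun (q : MvPolynomial σ K) i =>
    weightedDecomposition.decompose'_apply K (fun _ : σ => (1 : ℤ)) q i
  rw [hcomp, hcomp, ← h2, ← h2]
  exact h

lemma hcomp_mul' {f : MvPolynomial σ K} {d : ℤ} (hf : hg f d) (e t : ℤ) (ht : t = d + e)
    (g : MvPolynomial σ K) : hcomp t (f * g) = f * hcomp e g := by
  subst ht
  exact hcomp_mul hf e g

lemma hcomp_same {f : MvPolynomial σ K} {d : ℤ} (hf : hg f d) : hcomp d f = f :=
  hf.weightedHomogeneousComponent_same

/-- componentwise homogeneous component -/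
noncomputable def cv {ι : Type*} (a : ι → ℤ) (d : ℤ) (v : ι → MvPolynomial σ K) :
    ι → MvPolynomial σ K := fun i => hcomp (d - a i) (v i)

lemma cv_hg {ι : Type*} (a : ι → ℤ) (d : ℤ) (v : ι → MvPolynomial σ K) (i : ι) :
    hg (cv a d v i) (d - a i) :=
  weightedHomogeneousComponent_isWeightedHomogeneous _ _

lemma cv_ker {ι κ : Type*} [Fintype ι] (a : ι → ℤ) (b : κ → ℤ)
    (Φ : Matrix κ ι (MvPolynomial σ K)) (hΦ : ∀ j i, hg (Φ j i) (a i - b j)) (d : ℤ)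
    (v : ι → MvPolynomial σ K) (hv : Φ.mulVec v = 0) : Φ.mulVec (cv a d v) = 0 := by
  ext1 r
  have h := congrArg (hcomp (d - b r)) (congrFun hv r)
  simp only [Matrix.mulVec, dotProduct, Pi.zero_apply, map_zero, map_sum] at h ⊢
  rw [← h]
  exact Finset.sum_congr rfl fun i _ => (hcomp_mul' (hΦ r i) (d - a i) _ (by ring) _).symm

lemma cv_wedge {ι : Type*} (a : ι → ℤ) (d e : ℤ) (s v : ι → MvPolynomial σ K)
    (hs : ∀ i, hg (s i) (e - a i)) (i j : ι) :
    s i * cv a d v j - s j * cv a d v i = hcomp (e + d - a i - a j) (s i * v j - s j * v i) := by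
  rw [map_sub, hcomp_mul' (hs i) (d - a j) _ (by ring), hcomp_mul' (hs j) (d - a i) _ (by ring)]
  rfl

lemma hg_det {ι : Type*} [Fintype ι] [DecidableEq ι] (a β : ι → ℤ)
    (M : Matrix ι ι (MvPolynomial σ K)) (hM : ∀ r c, hg (M r c) (a c - β r)) :
    hg M.det (∑ i, a i - ∑ i, β i) := by
  rw [Matrix.det_apply']
  apply IsWeightedHomogeneous.sum
  intro τ _
  have h := IsWeightedHomogeneous.prod Finset.univ (fun i => M (τ i) i) (fun i => a i - β (τ i))
    (w := fun _ : σ => (1 : ℤ)) (fun i _ => hM _ _)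
  rw [Finset.sum_sub_distrib, Equiv.sum_comp τ β] at h
  have h2 := h.C_mul (((Equiv.Perm.sign τ : ℤ) : K))
  simpa using h2

lemma om_hg {n : ℕ} (a : Fin n ⊕ Fin 2 → ℤ) (b : Fin n → ℤ)
    (Φ : Matrix (Fin n) (Fin n ⊕ Fin 2) (MvPolynomial σ K))
    (hΦ : ∀ j i, hg (Φ j i) (a i - b j)) (i j : Fin n ⊕ Fin 2) :
    hg (om Φ i j) (∑ i, a i - ∑ j, b j - a i - a j) := by
  have h := hg_det a (Sum.elim b ![a i, a j]) (bigM Φ (Pi.single i 1) (Pi.single j 1)) (by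
    intro r c
    rcases r with r | r
    · simpa [bigM] using hΦ r c
    · fin_cases r
      · by_cases hc : c = i
        · subst hc; simpa [bigM] using isWeightedHomogeneous_one K (fun _ : σ => (1 : ℤ))
        · simpa [bigM, hc] using isWeightedHomogeneous_zero K (fun _ : σ => (1 : ℤ)) _
      · by_cases hc : c = j
        · subst hc; simpa [bigM] using isWeightedHomogeneous_one K (fun _ : σ => (1 : ℤ))
        · simpa [bigM, hc] using isWeightedHomogeneous_zero K (fun _ : σ => (1 : ℤ)) _)
  have e : ∑ i, a i - ∑ r, Sum.elim b ![a i, a j] r = ∑ i, a i - ∑ j, b j - a i - a j := by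
    rw [Fintype.sum_sum_type (Sum.elim b ![a i, a j])]
    simp
    ring
  rw [← e]
  exact h

lemma hg_mem {f : MvPolynomial (Fin 2) K} {d : ℤ} (hf : hg f d) (p : ℕ) (hd : 2 * (p : ℤ) - 1 ≤ d) :
    f ∈ Ideal.span {(X 0 : MvPolynomial (Fin 2) K) ^ p, X 1 ^ p} := by
  rw [f.as_sum]
  refine Ideal.sum_mem _ fun e he => ?_
  have h := hf (mem_support_iff.mp he)
  have h' : ((e 0 : ℕ) : ℤ) + (e 1 : ℕ) = d := by
    rw [← h, Finsupp.weight_apply, Finsupp.sum_fintype _ _ (by simp)]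
    simp
  rw [monomial_eq, Finsupp.prod_fintype _ _ (by simp), Fin.prod_univ_two]
  apply Ideal.mul_mem_left
  rcases le_or_gt p (e 0) with h0 | h0
  · apply Ideal.mul_mem_right
    exact Ideal.mem_of_dvd _ (pow_dvd_pow _ h0) (Ideal.subset_span (by simp))
  · have h1 : p ≤ e 1 := by omega
    apply Ideal.mul_mem_left
    exact Ideal.mem_of_dvd _ (pow_dvd_pow _ h1) (Ideal.subset_span (by simp))

lemma X_cancel (p q : ℕ) (f g : MvPolynomial (Fin 2) K) (h : X 1 ^ p * f = X 0 ^ q * g) :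
    ∃ r, f = X 0 ^ q * r := by
  apply (X_prime (R := K) (i := (0 : Fin 2))).pow_dvd_of_dvd_mul_left q (a := X 1 ^ p)
  · intro hd
    have := (X_prime (R := K) (i := (0 : Fin 2))).dvd_of_dvd_pow hd
    rw [X_dvd_X] at this
    simp at this
  · exact ⟨g, h⟩

end Gr

/-! ### Part 3: the theorem over `K[x,y]` -/

section Core
variable {K : Type*} [Field K]

lemma wedge_zero {ι : Type*} [Fintype ι] (s : ι → MvPolynomial (Fin 2) K) (p : ℕ)
    (h0 : X 0 ^ p ∈ Ideal.span (Set.range s)) (h1 : X 1 ^ p ∈ Ideal.span (Set.range s))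
    (w : ι → MvPolynomial (Fin 2) K) (hw : ∀ i j, s i * w j - s j * w i = 0) :
    ∃ g, ∀ i, w i = g * s i := by
  rw [Ideal.mem_span_range_iff_exists_fun] at h0 h1
  obtain ⟨c, hc⟩ := h0
  obtain ⟨e, he⟩ := h1
  have key : ∀ (c : ι → MvPolynomial (Fin 2) K) j,
      (∑ i, c i * s i) * w j = (∑ i, c i * w i) * s j := by
    intro c j
    rw [Finset.sum_mul, Finset.sum_mul]
    exact Finset.sum_congr rfl fun i _ => by linear_combination c i * hw i j
  have k0 := key c
  have k1 := key e
  rw [hc] at k0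
  rw [he] at k1
  by_cases hs : ∃ j, s j ≠ 0
  · obtain ⟨j, hj⟩ := hs
    obtain ⟨g, hg⟩ := X_cancel p p (∑ i, c i * w i) (∑ i, e i * w i) (by
      apply mul_right_cancel₀ hj
      linear_combination X 0 ^ p * k1 j - X 1 ^ p * k0 j)
    refine ⟨g, fun i => ?_⟩
    have := k0 i
    rw [hg] at this
    apply mul_left_cancel₀ (pow_ne_zero p (X_ne_zero (R := K) (0 : Fin 2)))
    linear_combination this
  · push Not at hs
    exfalso
    simp [hs] at hc
    exact absurd hc.symm (pow_ne_zero p (X_ne_zero (R := K) (0 : Fin 2)))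

theorem core (n : ℕ) (a : Fin n ⊕ Fin 2 → ℤ) (b : Fin n → ℤ)
    (Φ : Matrix (Fin n) (Fin n ⊕ Fin 2) (MvPolynomial (Fin 2) K))
    (hΦ : ∀ j i, hg (Φ j i) (a i - b j)) (m k : ℤ) (hk : 0 ≤ k)
    (hm : (∑ i, a i) - (∑ j, b j) = 2 * m + 1)
    (q : ℕ) (A0 A1 : Matrix (Fin n ⊕ Fin 2) (Fin n) (MvPolynomial (Fin 2) K))
    (hA0 : Φ * A0 = (X 0 ^ q : MvPolynomial (Fin 2) K) • 1)
    (hA1 : Φ * A1 = (X 1 ^ q : MvPolynomial (Fin 2) K) • 1)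
    (s : Fin n ⊕ Fin 2 → MvPolynomial (Fin 2) K)
    (hs : Φ.mulVec s = 0) (hsd : ∀ i, hg (s i) (m - k - a i))
    (p : ℕ)
    (h0 : X 0 ^ p ∈ Ideal.span (Set.range s)) (h1 : X 1 ^ p ∈ Ideal.span (Set.range s)) :
    ∃ v : Fin n ⊕ Fin 2 → MvPolynomial (Fin 2) K, (∀ i, hg (v i) (m + k + 1 - a i)) ∧
      Φ.mulVec v = 0 ∧ ∀ w, Φ.mulVec w = 0 →
        ∃! rs : MvPolynomial (Fin 2) K × MvPolynomial (Fin 2) K, w = rs.1 • s + rs.2 • v := by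
  have hX : ∀ i (p : ℕ), (X i ^ p : MvPolynomial (Fin 2) K) ≠ 0 :=
    fun i p => pow_ne_zero p (X_ne_zero i)
  obtain ⟨i0, j0, hω⟩ := om_ne Φ A0 _ (hX 0 q) hA0
  have hs0 : ∃ j, s j ≠ 0 := by
    by_contra! hcon
    have : s = 0 := funext hcon
    rw [this] at h0
    have : Set.range (0 : Fin n ⊕ Fin 2 → MvPolynomial (Fin 2) K) ⊆ {0} := by
      rintro _ ⟨i, rfl⟩; rfl
    have h := Ideal.span_mono this h0
    simp only [Ideal.mem_span_singleton, zero_dvd_iff] at h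
    exact hX 0 p h
  -- a kernel element with prescribed multiple
  have hV : ∀ (z : Fin 2), X z ^ p ∈ Ideal.span (Set.range s) →
      ∃ V, (∀ i, hg (V i) (p + m + k + 1 - a i)) ∧ Φ.mulVec V = 0 ∧
        ∀ i j, s i * V j - s j * V i = X z ^ p * om Φ i j := by
    intro z hz
    rw [Ideal.mem_span_range_iff_exists_fun] at hz
    obtain ⟨c, hc⟩ := hz
    let V0 : Fin n ⊕ Fin 2 → MvPolynomial (Fin 2) K := ∑ l, c l • om Φ l
    have hV0 : Φ.mulVec V0 = 0 := by
      simp only [V0]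
      rw [Matrix.mulVec_sum]
      apply Finset.sum_eq_zero
      intro l _
      rw [Matrix.mulVec_smul, om_ker, smul_zero]
    refine ⟨cv a (p + m + k + 1) V0, cv_hg _ _ _, cv_ker a b Φ hΦ _ _ hV0, fun i j => ?_⟩
    rw [cv_wedge a _ (m - k) s V0 hsd]
    have e1 : s i * V0 j - s j * V0 i = X z ^ p * om Φ i j := by
      rw [← hc]
      simp only [V0, Finset.sum_apply, Pi.smul_apply, smul_eq_mul, Finset.mul_sum,
        Finset.sum_mul, ← Finset.sum_sub_distrib]
      refine Finset.sum_congr rfl fun l _ => ?_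
      have r1 := om_rel Φ s hs l i j
      rw [om_swap Φ l i] at r1
      linear_combination - c l * r1
    rw [e1]
    apply hcomp_same
    have h2 := ((isWeightedHomogeneous_X K (fun _ : Fin 2 => (1 : ℤ)) z).pow p).mul
      (om_hg a b Φ hΦ i j)
    convert! h2 using 1
    rw [hm]
    simp
    ring
  obtain ⟨V0, hV0d, hV0k, hV0w⟩ := hV 0 h0
  obtain ⟨V1, hV1d, hV1k, hV1w⟩ := hV 1 h1
  obtain ⟨g, hgg⟩ := wedge_zero s p h0 h1 (fun i => X 1 ^ p * V0 i - X 0 ^ p * V1 i) (by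
    intro i j
    linear_combination X 1 ^ p * hV0w i j - X 0 ^ p * hV1w i j)
  set g' := hcomp (2 * p + 2 * k + 1) g with hg'
  have hgg' : ∀ i, X 1 ^ p * V0 i - X 0 ^ p * V1 i = g' * s i := by
    intro i
    have e2 : hg (X 1 ^ p * V0 i - X 0 ^ p * V1 i) (2 * p + m + k + 1 - a i) := by
      have t0 := ((isWeightedHomogeneous_X K (fun _ : Fin 2 => (1 : ℤ)) 1).pow p).mul (hV0d i)
      have t1 := ((isWeightedHomogeneous_X K (fun _ : Fin 2 => (1 : ℤ)) 0).pow p).mul (hV1d i)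
      convert! t0.sub t1 using 1
      simp
      ring
    have e3 := hcomp_same e2
    rw [hgg i, mul_comm g, hcomp_mul' (hsd i) (2 * p + 2 * k + 1) _ (by ring)] at e3
    rw [hgg i, mul_comm g, ← e3, mul_comm]
  have hgh : hg g' (2 * p + 2 * k + 1) := weightedHomogeneousComponent_isWeightedHomogeneous _ _
  have hmem := hg_mem hgh p (by omega)
  rw [Ideal.mem_span_pair] at hmem
  obtain ⟨g2, g1, hg12⟩ := hmem
  have hvex : ∀ i, ∃ r, V0 i - g1 * s i = X 0 ^ p * r := by
    intro i
    apply X_cancel p p _ (V1 i + g2 * s i)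
    have := hgg' i
    rw [← hg12] at this
    linear_combination this
  choose v hv using hvex
  have hvk : Φ.mulVec v = 0 := by
    have h2 : Φ.mulVec ((X 0 ^ p : MvPolynomial (Fin 2) K) • v) = 0 := by
      have : (X 0 ^ p : MvPolynomial (Fin 2) K) • v = V0 - g1 • s := by
        ext1 i
        simp [← hv i]
      rw [this, Matrix.mulVec_sub, Matrix.mulVec_smul, hV0k, hs]
      simp
    rw [Matrix.mulVec_smul] at h2
    exact (smul_eq_zero.mp h2).resolve_left (hX 0 p)
  have hvw : ∀ i j, s i * v j - s j * v i = om Φ i j := by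
    intro i j
    apply mul_left_cancel₀ (hX 0 p)
    rw [← hV0w i j]
    linear_combination s j * hv i - s i * hv j
  set v' := cv a (m + k + 1) v with hv'
  have hvk' : Φ.mulVec v' = 0 := cv_ker a b Φ hΦ _ _ hvk
  have hvw' : ∀ i j, s i * v' j - s j * v' i = om Φ i j := by
    intro i j
    rw [hv', cv_wedge a _ (m - k) s v hsd, hvw]
    apply hcomp_same
    convert! om_hg a b Φ hΦ i j using 1
    rw [hm]
    ring
  refine ⟨v', cv_hg _ _ _, hvk', fun w hw => ?_⟩
  obtain ⟨r0, hr0⟩ := om_block Φ A0 _ hA0 s w hs hw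
  obtain ⟨r1, hr1⟩ := om_block Φ A1 _ hA1 s w hs hw
  rw [← pow_mul] at hr0 hr1
  obtain ⟨r, hr⟩ := X_cancel (q * n) (q * n) r0 r1 (by
    apply mul_right_cancel₀ hω
    linear_combination X 0 ^ (q * n) * hr1 i0 j0 - X 1 ^ (q * n) * hr0 i0 j0)
  have hrw : ∀ i j, s i * w j - s j * w i = r * om Φ i j := by
    intro i j
    apply mul_left_cancel₀ (hX 0 (q * n))
    rw [hr0 i j, hr]
    ring
  obtain ⟨f, hf⟩ := wedge_zero s p h0 h1 (fun i => w i - r * v' i) (by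
    intro i j
    linear_combination hrw i j - r * hvw' i j)
  refine ⟨(f, r), ?_, ?_⟩
  · ext1 i
    simp only [Pi.add_apply, Pi.smul_apply, smul_eq_mul]
    linear_combination hf i
  · rintro ⟨f', r'⟩ h
    have h' : ∀ i, w i = f' * s i + r' * v' i := fun i => congrFun h i
    have er : r' = r := by
      apply mul_right_cancel₀ hω
      rw [← hrw i0 j0, ← hvw' i0 j0, h' i0, h' j0]
      ring
    subst er
    obtain ⟨j, hj⟩ := hs0
    have ef : f' = f := by
      apply mul_right_cancel₀ hj
      linear_combination hf j - h' j
    rw [ef]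

end Core

/-! ### Part 4: general linear forms -/

section Gen
variable {K : Type*} [Field K]

attribute [local instance] MvPolynomial.weightedGradedAlgebra

lemma hcomp_neg {σ : Type*} (y : MvPolynomial σ K) : hcomp (-1) y = 0 := by
  classical
  ext d
  rw [coeff_weightedHomogeneousComponent, if_neg]
  · simp
  · rw [Finsupp.weight_apply, Finsupp.sum]
    have : 0 ≤ ∑ a ∈ d.support, d a • (1 : ℤ) := Finset.sum_nonneg fun i _ => by simp
    omega

lemma X_mem_of_homog_max {σ : Type*} (I : Ideal (MvPolynomial σ K)) (hI : I.IsMaximal)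
    (hh : I.IsHomogeneous (weightedHomogeneousSubmodule K (fun _ : σ => (1 : ℤ)))) (j : σ) :
    X j ∈ I := by
  by_contra hX
  obtain ⟨y, hy⟩ := hI.exists_inv hX
  obtain ⟨i, hi, hyi⟩ := hy
  have h := weightedHomogeneousComponent_mem_of_mem K (fun _ : σ => (1 : ℤ)) hh hi 0
  have e : i = 1 - X j * y := by rw [← hyi]; ring
  rw [e, map_sub] at h
  have e1 := hcomp_same (isWeightedHomogeneous_one K (fun _ : σ => (1 : ℤ)))
  have e2 := hcomp_mul' (isWeightedHomogeneous_X K (fun _ : σ => (1 : ℤ)) j) (-1) 0 (by ring) y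
  rw [hcomp_neg] at e2
  rw [e1, e2] at h
  simp at h
  exact hI.ne_top ((Ideal.eq_top_iff_one _).mpr h)

lemma isMaximal_of_chain (f : MvPolynomial (Fin 3) K) (hf : Prime f)
    (p q : Ideal (MvPolynomial (Fin 3) K)) [p.IsPrime] [q.IsPrime]
    (h1 : Ideal.span {f} < p) (h2 : p < q) : q.IsMaximal := by
  have hd : ringKrullDim (MvPolynomial (Fin 3) K) = 3 := by
    rw [MvPolynomial.ringKrullDim_of_isNoetherianRing]; simp
  have : (Ideal.span {f}).IsPrime := (Ideal.span_singleton_prime hf.ne_zero).mpr hf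
  have h0 : (⊥ : Ideal (MvPolynomial (Fin 3) K)) < Ideal.span {f} := by
    rw [bot_lt_iff_ne_bot, Ne, Ideal.span_singleton_eq_bot]; exact hf.ne_zero
  have a0 := Ideal.height_add_one_le_of_lt_of_isPrime h0
  have a1 := Ideal.height_add_one_le_of_lt_of_isPrime h1
  have a2 := Ideal.height_add_one_le_of_lt_of_isPrime h2
  have a3 := Ideal.height_le_ringKrullDim_of_isPrime (I := q)
  have : FiniteRingKrullDim (MvPolynomial (Fin 3) K) := by
    rw [finiteRingKrullDim_iff_ne_bot_and_top, hd]
    exact ⟨by decide, by decide⟩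
  apply Ideal.isMaximal_of_height_eq_ringKrullDim
  · have h3 : (3 : ℕ∞) ≤ q.height := by
      have := (add_le_add_left ((add_le_add_left a0 1).trans a1) 1).trans a2
      refine le_trans ?_ this
      have h4 : (3 : ℕ∞) = 0 + 1 + 1 + 1 := by norm_num
      rw [h4]
      gcongr
      exact zero_le
    rw [hd] at a3 ⊢
    refine le_antisymm a3 ?_
    exact WithBot.coe_le_coe.mpr h3

lemma eval_linform (c d : Fin 3 → K) : eval c (linform d) = ∑ i, d i * c i := by
  simp [linform]

lemma exists_avoid (p : Ideal (MvPolynomial (Fin 3) K)) (hp : ∃ j, X j ∉ p) :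
    ∃ P : MvPolynomial (Fin 3) K, P ≠ 0 ∧ ∀ c, eval c P ≠ 0 → linform c ∉ p := by
  let W : Submodule K (Fin 3 → K) :=
    { carrier := {c | linform c ∈ p}
      add_mem' := by
        intro x y hx hy
        have : linform (x + y) = linform x + linform y := by
          simp [linform, add_mul, Finset.sum_add_distrib]
        simp only [Set.mem_ofPred_eq] at hx hy ⊢
        rw [this]; exact p.add_mem hx hy
      zero_mem' := by simp [linform]
      smul_mem' := by
        intro r x hx
        have : linform (r • x) = C r * linform x := by
          simp [linform, Finset.mul_sum, mul_assoc]
        simp only [Set.mem_ofPred_eq] at hx ⊢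
        rw [this]; exact p.mul_mem_left _ hx }
  have hW : W < ⊤ := by
    rw [lt_top_iff_ne_top]
    intro h
    obtain ⟨j, hj⟩ := hp
    have : (Pi.single j 1 : Fin 3 → K) ∈ W := by rw [h]; trivial
    apply hj
    have e : linform (Pi.single j 1 : Fin 3 → K) = X j := by
      simp [linform, Pi.single_apply]
    rw [← e]
    exact this
  obtain ⟨f, hf, hWf⟩ := Submodule.exists_le_ker_of_lt_top W hW
  have hfe : ∀ c, eval c (linform fun i => f (Pi.single i 1)) = f c := by
    intro c
    rw [eval_linform, LinearMap.pi_apply_eq_sum_univ f c]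
    refine Finset.sum_congr rfl fun i _ => ?_
    rw [smul_eq_mul, mul_comm]
    congr 2
    ext x
    simp [Pi.single_apply, eq_comm]
  refine ⟨linform fun i => f (Pi.single i 1), ?_, ?_⟩
  · intro h
    apply hf
    ext1 c
    simp only [LinearMap.zero_comp]
    ext
    simp only [LinearMap.comp_apply, LinearMap.zero_apply]
    rw [← hfe, h, map_zero]
  · intro c hc hcp
    rw [hfe] at hc
    exact hc (hWf (show c ∈ W from hcp))

theorem generic {ι : Type*} (a : ι → ℤ) (d : ℤ) (s : ι → MvPolynomial (Fin 3) K)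
    (hsd : ∀ i, hg (s i) (d - a i)) (hs0 : ∃ i, s i ≠ 0)
    (hcop : ∀ f, Prime f → ¬ ∀ i, f ∣ s i) :
    ∃ P : MvPolynomial (Fin 3) K, P ≠ 0 ∧ ∀ c, eval c P ≠ 0 →
      ∀ j, X j ∈ (Ideal.span (Set.range s) ⊔ Ideal.span {linform c}).radical := by
  classical
  set I := Ideal.span (Set.range s) with hI
  have hfin := I.finite_minimalPrimes_of_isNoetherianRing
  have hQ : ∀ p : Ideal (MvPolynomial (Fin 3) K), ∃ P : MvPolynomial (Fin 3) K, P ≠ 0 ∧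
      ∀ c, eval c P ≠ 0 → linform c ∉ p ∨ ∀ j, X j ∈ p := by
    intro p
    by_cases hp : ∃ j, X j ∉ p
    · obtain ⟨P, h0, h⟩ := exists_avoid p hp
      exact ⟨P, h0, fun c hc => Or.inl (h c hc)⟩
    · push Not at hp
      exact ⟨1, one_ne_zero, fun c _ => Or.inr hp⟩
  choose Q hQ0 hQ using hQ
  refine ⟨∏ p ∈ hfin.toFinset, Q p, Finset.prod_ne_zero_iff.mpr fun p _ => hQ0 p, ?_⟩
  intro c hc j
  rw [map_prod, Finset.prod_ne_zero_iff] at hc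
  rw [Ideal.radical_eq_sInf, Ideal.mem_sInf]
  rintro q ⟨hq, hqp⟩
  set 𝒜 := weightedHomogeneousSubmodule K (fun _ : Fin 3 => (1 : ℤ)) with h𝒜
  let q' := (q.homogeneousCore 𝒜).toIdeal
  have hq' : q'.IsPrime := hqp.homogeneousCore
  have hle : q' ≤ q := Ideal.toIdeal_homogeneousCore_le 𝒜 q
  have hIq : I ≤ q' := by
    rw [hI, Ideal.span_le]
    rintro _ ⟨i, rfl⟩
    apply Ideal.mem_homogeneousCore_of_homogeneous_of_mem ⟨_, hsd i⟩
    exact hq (Ideal.mem_sup_left (Ideal.subset_span ⟨i, rfl⟩))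
  have hLq : linform c ∈ q' := by
    apply Ideal.mem_homogeneousCore_of_homogeneous_of_mem ⟨_, homog_linform c⟩
    exact hq (Ideal.mem_sup_right (Ideal.subset_span rfl))
  obtain ⟨p, hp, hpq⟩ := Ideal.exists_minimalPrimes_le hIq
  have hpp : p.IsPrime := hp.1.1
  have hIp : I ≤ p := hp.1.2
  rcases hQ p c (hc p (by simpa using hp)) with h | h
  · have hpq' : p < q' := lt_of_le_of_ne hpq fun e => h (e ▸ hLq)
    obtain ⟨i, hi⟩ := hs0
    have hsp : ∀ i, s i ∈ p := fun i => hIp (Ideal.subset_span ⟨i, rfl⟩)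
    obtain ⟨f, hfp, hf⟩ := hpp.exists_mem_prime_of_ne_bot (fun e => hi (by simpa [e] using hsp i))
    have hfp' : Ideal.span {f} < p := by
      refine lt_of_le_of_ne ((Ideal.span_singleton_le_iff_mem _).mpr hfp) fun e => hcop f hf ?_
      intro i
      rw [← Ideal.mem_span_singleton, e]
      exact hsp i
    have hmax := isMaximal_of_chain f hf p q' hfp' hpq'
    exact hle (X_mem_of_homog_max q' hmax (q.homogeneousCore 𝒜).isHomogeneous j)
  · exact hle (hpq (h j))

end Gen

/-! ### Part 5: assembly -/

section Asm
variable {K : Type*} [Field K]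

lemma weight_one_eq {σ : Type*} (D : σ →₀ ℕ) :
    Finsupp.weight (fun _ : σ => (1 : ℤ)) D = ((D.sum fun _ e => e : ℕ) : ℤ) := by
  rw [Finsupp.weight_apply, Finsupp.sum, Finsupp.sum]
  simp

lemma exists_top {σ : Type*} (p : MvPolynomial σ K) (hp : p ≠ 0) :
    ∃ D, coeff D p ≠ 0 ∧ Finsupp.weight (fun _ : σ => (1 : ℤ)) D = p.totalDegree := by
  obtain ⟨D, hD, h⟩ := Finset.exists_mem_eq_sup p.support (by simpa using hp)
    (fun s => s.sum fun _ e => e)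
  refine ⟨D, mem_support_iff.mp hD, ?_⟩
  rw [weight_one_eq]
  exact congrArg _ h.symm

lemma hg_totalDegree {σ : Type*} (p : MvPolynomial σ K) (hp : p ≠ 0) (d : ℤ) (h : hg p d) :
    (p.totalDegree : ℤ) = d := by
  obtain ⟨D, hD, hw⟩ := exists_top p hp
  rw [← hw]
  exact h hD

lemma hg_aeval {σ τ : Type*} (g : σ → MvPolynomial τ K) (hgg : ∀ i, hg (g i) 1)
    (f : MvPolynomial σ K) (d : ℤ) (hf : hg f d) : hg (aeval g f) d := by
  rw [f.as_sum, map_sum]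
  apply IsWeightedHomogeneous.sum
  intro D hD
  rw [aeval_monomial]
  apply IsWeightedHomogeneous.C_mul
  have h := IsWeightedHomogeneous.prod D.support (fun i => g i ^ D i) (fun i => D i • (1 : ℤ))
    (w := fun _ : τ => (1 : ℤ)) (fun i _ => (hgg i).pow _)
  have h2 := hf (mem_support_iff.mp hD)
  rw [Finsupp.weight_apply] at h2
  rw [← h2]
  exact h

lemma coprime_of_min (n : ℕ) (a : Fin (n + 2) → ℤ) (b : Fin n → ℤ)
    (Φ : Matrix (Fin n) (Fin (n + 2)) (MvPolynomial (Fin 3) K))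
    (hΦ : ∀ j i, homog (Φ j i) (a i - b j)) (d : ℤ)
    (hmin : ∀ e, e < d → Nd n a Φ e = ⊥) (s : Fin (n + 2) → MvPolynomial (Fin 3) K)
    (hsd : ∀ i, hg (s i) (d - a i)) (hs : Φ.mulVec s = 0) (hs0 : ∃ i, s i ≠ 0)
    (f : MvPolynomial (Fin 3) K) (hf : Prime f) : ¬ ∀ i, f ∣ s i := by
  intro hdvd
  choose t ht using hdvd
  have hst : s = f • t := by ext1 i; simp [ht i]
  have htk : Φ.mulVec t = 0 := by
    rw [hst, Matrix.mulVec_smul] at hs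
    exact (smul_eq_zero.mp hs).resolve_left hf.ne_zero
  have hpos : 0 < f.totalDegree := by
    rw [Nat.pos_iff_ne_zero]
    intro h0
    rw [totalDegree_eq_zero_iff_eq_C] at h0
    apply hf.not_unit
    rw [h0]
    apply IsUnit.map
    rw [isUnit_iff_ne_zero]
    intro h1
    rw [h1, map_zero] at h0
    exact hf.ne_zero h0
  have hN := hmin (d - f.totalDegree) (by omega)
  have hmem : cv a (d - f.totalDegree) t ∈ Nd n a Φ (d - f.totalDegree) := by
    refine Submodule.mem_inf.mpr ⟨mem_degPiece.mpr fun i => cv_hg _ _ _ i, ?_⟩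
    rw [LinearMap.mem_ker]
    exact cv_ker a b Φ hΦ _ _ htk
  rw [hN, Submodule.mem_bot] at hmem
  obtain ⟨i, hi⟩ := hs0
  have hti : t i ≠ 0 := fun h => hi (by rw [ht i, h, mul_zero])
  obtain ⟨D, hD, hw⟩ := exists_top (t i) hti
  have h1 := hg_totalDegree _ hi _ (hsd i)
  rw [ht i, totalDegree_mul_of_isDomain hf.ne_zero hti] at h1
  push_cast at h1
  have h2 := congrArg (coeff D) (congrFun hmem i)
  classical
  simp only [cv, coeff_weightedHomogeneousComponent, Pi.zero_apply, coeff_zero] at h2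
  rw [if_pos (by rw [hw]; linarith)] at h2
  exact hD h2

lemma exists_lift (n : ℕ) (a : Fin (n + 2) → ℤ) (b : Fin n → ℤ)
    (Φ : Matrix (Fin n) (Fin (n + 2)) (MvPolynomial (Fin 3) K))
    (hfin : FiniteColength n a b Φ) :
    ∃ q : ℕ, ∀ z : Fin 3, ∃ A : Matrix (Fin (n + 2)) (Fin n) (MvPolynomial (Fin 3) K),
      Φ * A = (X z ^ q : MvPolynomial (Fin 3) K) • 1 := by
  obtain ⟨D, hD⟩ := hfin
  refine ⟨∑ j, (D - b j).natAbs, fun z => ?_⟩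
  set q := ∑ j, (D - b j).natAbs with hq
  have hv : ∀ j, ∃ v, Φ.mulVec v = Pi.single j (X z ^ q : MvPolynomial (Fin 3) K) := by
    intro j
    have hle : (D - b j).natAbs ≤ q :=
      Finset.single_le_sum (f := fun j => (D - b j).natAbs) (fun _ _ => Nat.zero_le _)
        (Finset.mem_univ j)
    have h : Pi.single j (X z ^ q : MvPolynomial (Fin 3) K) ∈ degPiece (K := K) n b (q + b j) := by
      rw [mem_degPiece]
      intro i
      by_cases hi : i = j
      · subst hi
        simpa [homog] using (isWeightedHomogeneous_X K (fun _ : Fin 3 => (1 : ℤ)) z).pow q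
      · simpa [hi, homog] using isWeightedHomogeneous_zero K (fun _ : Fin 3 => (1 : ℤ)) _
    obtain ⟨v, -, hv⟩ := hD (q + b j) (by omega) h
    exact ⟨v, hv⟩
  choose v hv using hv
  refine ⟨(Matrix.of v).transpose, ?_⟩
  ext1 i j
  have := congrFun (hv j) i
  simp only [Matrix.mulVec, dotProduct] at this
  rw [Matrix.mul_apply]
  simp only [Matrix.transpose_apply, Matrix.of_apply, this]
  simp [Matrix.one_apply, Pi.single_apply]

/-- restriction to the line `linform c = 0` (when `c 2 ≠ 0`). -/
noncomputable def piL (c : Fin 3 → K) : MvPolynomial (Fin 3) K →ₐ[K] MvPolynomial (Fin 2) K :=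
  aeval ![X 0, X 1, C (-(c 2)⁻¹ * c 0) * X 0 + C (-(c 2)⁻¹ * c 1) * X 1]

/-- the section of `piL`. -/
noncomputable def secL : MvPolynomial (Fin 2) K →ₐ[K] MvPolynomial (Fin 3) K :=
  aeval ![X 0, X 1]

lemma piL_hg (c : Fin 3 → K) (f : MvPolynomial (Fin 3) K) (d : ℤ) (hf : hg f d) :
    hg (piL c f) d := by
  apply hg_aeval _ _ _ _ hf
  have h : ∀ i, hg (X i : MvPolynomial (Fin 2) K) 1 := fun i => isWeightedHomogeneous_X K _ i
  intro i
  fin_cases i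
  · exact h 0
  · exact h 1
  · exact ((h 0).C_mul _).add ((h 1).C_mul _)

lemma secL_hg (f : MvPolynomial (Fin 2) K) (d : ℤ) (hf : hg f d) : hg (secL f) d := by
  apply hg_aeval _ _ _ _ hf
  intro i
  fin_cases i
  · exact isWeightedHomogeneous_X K _ 0
  · exact isWeightedHomogeneous_X K _ 1

lemma piL_secL (c : Fin 3 → K) (f : MvPolynomial (Fin 2) K) : piL c (secL f) = f := by
  have : (piL c).comp secL = AlgHom.id K _ := by
    ext1 i
    fin_cases i <;> simp [piL, secL]
  exact DFunLike.congr_fun this f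

lemma piL_lin (c : Fin 3 → K) (hc : c 2 ≠ 0) : piL c (linform c) = 0 := by
  have h : C (c 2) * C (c 2)⁻¹ = (1 : MvPolynomial (Fin 2) K) := by
    rw [← map_mul, mul_inv_cancel₀ hc, map_one]
  simp only [linform, map_sum, map_mul, Fin.sum_univ_three, piL, aeval_X, algHom_C, algebraMap_eq,
    map_neg]
  simp
  linear_combination (-(C (c 0) * X 0) - C (c 1) * X 1) * h

lemma mk_sec_pi (c : Fin 3 → K) (hc : c 2 ≠ 0) (f : MvPolynomial (Fin 3) K) :
    Ideal.Quotient.mk (Ideal.span {linform c}) (secL (piL c f)) =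
      Ideal.Quotient.mk (Ideal.span {linform c}) f := by
  have : (Ideal.Quotient.mkₐ K (Ideal.span {linform c})).comp (secL.comp (piL c)) =
      Ideal.Quotient.mkₐ K (Ideal.span {linform c}) := by
    ext1 i
    fin_cases i
    · simp [piL, secL]
    · simp [piL, secL]
    · have h : C (c 2) * C (c 2)⁻¹ = (1 : MvPolynomial (Fin 3) K) := by
        rw [← map_mul, mul_inv_cancel₀ hc, map_one]
      simp only [AlgHom.comp_apply, Ideal.Quotient.mkₐ_eq_mk]
      rw [Ideal.Quotient.eq, Ideal.mem_span_singleton]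
      refine ⟨- C (c 2)⁻¹, ?_⟩
      simp [piL, secL, linform, Fin.sum_univ_three, aeval_C, algebraMap_eq]
      linear_combination X 2 * h
  exact DFunLike.congr_fun this f

/-- the ring isomorphism `K[x,y] ≃ R/(L)`. -/
noncomputable def eqL (c : Fin 3 → K) (hc : c 2 ≠ 0) :
    MvPolynomial (Fin 2) K ≃+* MvPolynomial (Fin 3) K ⧸ Ideal.span {linform c} :=
  RingEquiv.ofBijective
    ((Ideal.Quotient.mk (Ideal.span {linform c})).comp (secL : MvPolynomial (Fin 2) K →ₐ[K] _).toRingHom)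
    (by
      constructor
      · rw [injective_iff_map_eq_zero]
        intro f hf
        have h1 : secL f ∈ Ideal.span {linform c} := Ideal.Quotient.eq_zero_iff_mem.mp hf
        obtain ⟨g, hg⟩ := Ideal.mem_span_singleton.mp h1
        rw [← piL_secL c f, hg, map_mul, piL_lin c hc, zero_mul]
      · intro y
        obtain ⟨f, rfl⟩ := Ideal.Quotient.mk_surjective y
        exact ⟨piL c f, mk_sec_pi c hc f⟩)

lemma eqL_apply (c : Fin 3 → K) (hc : c 2 ≠ 0) (f : MvPolynomial (Fin 2) K) :
    eqL c hc f = Ideal.Quotient.mk (Ideal.span {linform c}) (secL f) := rfl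

lemma eqL_pi (c : Fin 3 → K) (hc : c 2 ≠ 0) (f : MvPolynomial (Fin 3) K) :
    eqL c hc (piL c f) = Ideal.Quotient.mk (Ideal.span {linform c}) f := mk_sec_pi c hc f

/-- `core` with columns indexed by `Fin (n+2)`. -/
theorem core' (n : ℕ) (a : Fin (n + 2) → ℤ) (b : Fin n → ℤ)
    (Φ : Matrix (Fin n) (Fin (n + 2)) (MvPolynomial (Fin 2) K))
    (hΦ : ∀ j i, hg (Φ j i) (a i - b j)) (m k : ℤ) (hk : 0 ≤ k)
    (hm : (∑ i, a i) - (∑ j, b j) = 2 * m + 1)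
    (q : ℕ) (A0 A1 : Matrix (Fin (n + 2)) (Fin n) (MvPolynomial (Fin 2) K))
    (hA0 : Φ * A0 = (X 0 ^ q : MvPolynomial (Fin 2) K) • 1)
    (hA1 : Φ * A1 = (X 1 ^ q : MvPolynomial (Fin 2) K) • 1)
    (s : Fin (n + 2) → MvPolynomial (Fin 2) K)
    (hs : Φ.mulVec s = 0) (hsd : ∀ i, hg (s i) (m - k - a i))
    (p : ℕ)
    (h0 : X 0 ^ p ∈ Ideal.span (Set.range s)) (h1 : X 1 ^ p ∈ Ideal.span (Set.range s)) :
    ∃ v : Fin (n + 2) → MvPolynomial (Fin 2) K, (∀ i, hg (v i) (m + k + 1 - a i)) ∧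
      Φ.mulVec v = 0 ∧ ∀ w, Φ.mulVec w = 0 →
        ∃! rs : MvPolynomial (Fin 2) K × MvPolynomial (Fin 2) K, w = rs.1 • s + rs.2 • v := by
  let e : Fin n ⊕ Fin 2 ≃ Fin (n + 2) := finSumFinEquiv
  have hker : ∀ v, (Φ.submatrix id e).mulVec (v ∘ e) = Φ.mulVec v := by
    intro v
    ext1 r
    simp only [Matrix.mulVec, dotProduct, Matrix.submatrix_apply, id, Function.comp]
    exact Equiv.sum_comp e (fun i => Φ r i * v i)
  have hmul : ∀ A : Matrix (Fin (n + 2)) (Fin n) (MvPolynomial (Fin 2) K),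
      (Φ.submatrix id e) * (A.submatrix e id) = Φ * A := by
    intro A
    rw [Matrix.submatrix_mul_equiv]
    rfl
  have hr : Set.range (s ∘ e) = Set.range s := e.surjective.range_comp s
  obtain ⟨v, hv1, hv2, hv3⟩ := core n (a ∘ e) b (Φ.submatrix id e) (fun j i => hΦ j (e i)) m k hk
    (by rw [← hm]; congr 1; exact Equiv.sum_comp e a) q (A0.submatrix e id) (A1.submatrix e id)
    (by rw [hmul, hA0]) (by rw [hmul, hA1]) (s ∘ e) (by rw [hker, hs]) (fun i => hsd (e i)) p
    (by rw [hr]; exact h0) (by rw [hr]; exact h1)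
  have hve : (v ∘ e.symm) ∘ e = v := by ext1; simp
  refine ⟨v ∘ e.symm, fun i => ?_, ?_, fun w hw => ?_⟩
  · simpa using hv1 (e.symm i)
  · rw [← hker, hve, hv2]
  · have hiff : ∀ rs : MvPolynomial (Fin 2) K × MvPolynomial (Fin 2) K,
        w ∘ e = rs.1 • (s ∘ e) + rs.2 • v ↔ w = rs.1 • s + rs.2 • (v ∘ e.symm) := by
      intro rs
      constructor
      · intro h
        ext1 i
        simpa using congrFun h (e.symm i)
      · intro h
        ext1 i
        simpa using congrFun h (e i)
    have h := hv3 (w ∘ e) (by rw [hker, hw])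
    simpa only [hiff] using h

end Asm

set_option synthInstance.maxHeartbeats 1000000 in
/-- Suppose `a - b = 2m + 1` is odd and `N_m ≠ 0` (unstable case), with
index of instability `k = max{ j : N_{m-j} ≠ 0 }`. Then for a general linear form `L`, writing
`S = R/(L)`, the kernel of the induced map `φ̄ : ⊕ S(-a_i) → ⊕ S(-b_j)` is a free graded
`S`-module isomorphic to `S(-(m-k)) ⊕ S(-(m+k+1))`: it has a free basis consisting of two
homogeneous elements, of degrees `m - k` and `m + k + 1`. -/
theorem statement12 {K : Type*} [Field K] [IsAlgClosed K] [CharZero K]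
    (n : ℕ) (a : Fin (n + 2) → ℤ) (b : Fin n → ℤ)
    (Φ : Matrix (Fin n) (Fin (n + 2)) (MvPolynomial (Fin 3) K))
    (hΦ : ∀ j i, homog (Φ j i) (a i - b j))
    (hfin : FiniteColength n a b Φ)
    (m : ℤ) (hm : (∑ i, a i) - (∑ j, b j) = 2 * m + 1)
    (hunstable : Nd n a Φ m ≠ ⊥)
    (k : ℤ) (hk₁ : Nd n a Φ (m - k) ≠ ⊥) (hk₂ : ∀ j : ℤ, Nd n a Φ (m - j) ≠ ⊥ → j ≤ k) :
    ∃ P : MvPolynomial (Fin 3) K, P ≠ 0 ∧ ∀ c : Fin 3 → K, eval c P ≠ 0 →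
      ∃ u v : Fin (n + 2) → MvPolynomial (Fin 3) K ⧸ Ideal.span {linform c},
        (∃ u' ∈ degPiece (K := K) (n + 2) a (m - k),
          ∀ i, Ideal.Quotient.mk (Ideal.span {linform c}) (u' i) = u i) ∧
        (∃ v' ∈ degPiece (K := K) (n + 2) a (m + k + 1),
          ∀ i, Ideal.Quotient.mk (Ideal.span {linform c}) (v' i) = v i) ∧
        (Φ.map (Ideal.Quotient.mk (Ideal.span {linform c}))).mulVec u = 0 ∧
        (Φ.map (Ideal.Quotient.mk (Ideal.span {linform c}))).mulVec v = 0 ∧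
        ∀ w : Fin (n + 2) → MvPolynomial (Fin 3) K ⧸ Ideal.span {linform c},
          (Φ.map (Ideal.Quotient.mk (Ideal.span {linform c}))).mulVec w = 0 →
          ∃! rs : (MvPolynomial (Fin 3) K ⧸ Ideal.span {linform c}) ×
              (MvPolynomial (Fin 3) K ⧸ Ideal.span {linform c}),
            w = rs.1 • u + rs.2 • v := by
  have hk : 0 ≤ k := hk₂ 0 (by simpa using hunstable)
  obtain ⟨s, hsN, hs0⟩ := Submodule.exists_mem_ne_zero_of_ne_bot hk₁
  have hsd : ∀ i, hg (s i) (m - k - a i) := mem_degPiece.mp (Submodule.mem_inf.mp hsN).1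
  have hsk : Φ.mulVec s = 0 := LinearMap.mem_ker.mp (Submodule.mem_inf.mp hsN).2
  have hs0' : ∃ i, s i ≠ 0 := Function.ne_iff.mp hs0
  have hmin : ∀ e, e < m - k → Nd n a Φ e = ⊥ := by
    intro e he
    by_contra hne
    have := hk₂ (m - e) (by rwa [sub_sub_cancel])
    omega
  obtain ⟨P, hP0, hP⟩ := generic a (m - k) s hsd hs0'
    (fun f hf => coprime_of_min n a b Φ hΦ (m - k) hmin s hsd hsk hs0' f hf)
  obtain ⟨q, hq⟩ := exists_lift n a b Φ hfin
  refine ⟨P * X 2, mul_ne_zero hP0 (X_ne_zero _), fun c hc => ?_⟩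
  rw [map_mul, eval_X] at hc
  have hc2 : c 2 ≠ 0 := right_ne_zero_of_mul hc
  have hrad := hP c (left_ne_zero_of_mul hc)
  -- restrict everything to the line
  let Ψ : Matrix (Fin n) (Fin (n + 2)) (MvPolynomial (Fin 2) K) := Φ.map (piL c)
  let t : Fin (n + 2) → MvPolynomial (Fin 2) K := fun i => piL c (s i)
  have ht : Ψ.mulVec t = 0 := by
    ext1 r
    have h := congrArg (piL c) (congrFun hsk r)
    simpa [Ψ, t, Matrix.mulVec, dotProduct] using h
  have hspan : ∀ f ∈ Ideal.span (Set.range s) ⊔ Ideal.span {linform c},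
      piL c f ∈ Ideal.span (Set.range t) := by
    intro f hf
    have hle : Ideal.span (Set.range s) ⊔ Ideal.span {linform c} ≤
        (Ideal.span (Set.range t)).comap (piL c) := by
      refine sup_le (Ideal.span_le.mpr ?_) (Ideal.span_le.mpr ?_)
      · rintro _ ⟨i, rfl⟩
        exact Ideal.subset_span ⟨i, rfl⟩
      · rintro _ rfl
        change piL c (linform c) ∈ Ideal.span (Set.range t)
        rw [piL_lin c hc2]
        exact Ideal.zero_mem _
    exact hle hf
  obtain ⟨p0, hp0⟩ := hrad 0
  obtain ⟨p1, hp1⟩ := hrad 1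
  have hx : X 0 ^ p0 ∈ Ideal.span (Set.range t) := by
    simpa [piL] using hspan _ hp0
  have hy : X 1 ^ p1 ∈ Ideal.span (Set.range t) := by
    simpa [piL] using hspan _ hp1
  have hx' : X 0 ^ (p0 + p1) ∈ Ideal.span (Set.range t) :=
    Ideal.mem_of_dvd _ (pow_dvd_pow _ (by omega)) hx
  have hy' : X 1 ^ (p0 + p1) ∈ Ideal.span (Set.range t) :=
    Ideal.mem_of_dvd _ (pow_dvd_pow _ (by omega)) hy
  obtain ⟨A0, hA0⟩ := hq 0
  obtain ⟨A1, hA1⟩ := hq 1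
  have hA : ∀ (z : Fin 3) (A : Matrix (Fin (n + 2)) (Fin n) (MvPolynomial (Fin 3) K)),
      Φ * A = (X z ^ q : MvPolynomial (Fin 3) K) • 1 →
      Ψ * A.map (piL c) = (piL c (X z) ^ q) • 1 := by
    intro z A h
    have h2 := congrArg (fun M => Matrix.map M (piL c)) h
    simp only [Matrix.map_mul] at h2
    rw [show Ψ = Φ.map (piL c) from rfl, h2]
    ext1 i j
    by_cases hij : i = j <;> simp [Matrix.one_apply, hij]
  obtain ⟨v, hv1, hv2, hv3⟩ := core' n a b Ψ (fun j i => piL_hg c _ _ (hΦ j i)) m k hk hm q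
    (A0.map (piL c)) (A1.map (piL c))
    (by simpa [piL] using hA 0 A0 hA0) (by simpa [piL] using hA 1 A1 hA1) t ht
    (fun i => piL_hg c _ _ (hsd i)) (p0 + p1) hx' hy'
  -- transport to the quotient ring
  let E := eqL c hc2
  have hΨ : ∀ w : Fin (n + 2) → MvPolynomial (Fin 2) K,
      (Φ.map (Ideal.Quotient.mk (Ideal.span {linform c}))).mulVec (fun i => E (w i)) =
        fun r => E (Ψ.mulVec w r) := by
    intro w
    ext1 r
    simp only [Matrix.mulVec, dotProduct, map_sum, map_mul, Matrix.map_apply, Ψ, E, eqL_pi]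
  refine ⟨fun i => E (t i), fun i => E (v i), ⟨s, (Submodule.mem_inf.mp hsN).1, fun i => ?_⟩,
    ⟨fun i => secL (v i), mem_degPiece.mpr fun i => secL_hg _ _ (hv1 i), fun i => rfl⟩, ?_, ?_, ?_⟩
  · exact (eqL_pi c hc2 (s i)).symm
  · rw [hΨ, ht]
    ext1 r
    simp
  · rw [hΨ, hv2]
    ext1 r
    simp
  · intro w hw
    have hwE : w = fun i => E (E.symm (w i)) := by ext1 i; simp
    rw [hwE, hΨ] at hw
    obtain ⟨⟨r1, r2⟩, h1, h2⟩ := hv3 (fun i => E.symm (w i)) (by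
      ext1 r
      apply E.injective
      rw [congrFun hw r]
      simp)
    refine ⟨(E r1, E r2), ?_, ?_⟩
    · ext1 i
      have h := congrArg E (congrFun h1 i)
      simpa using h
    · rintro ⟨x1, x2⟩ hxx
      have h3 := h2 (E.symm x1, E.symm x2) (by
        ext1 i
        have h := congrArg E.symm (congrFun hxx i)
        simpa using h)
      rw [Prod.mk.injEq] at h3
      rw [← h3.1, ← h3.2]
      simp
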